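/- Let K ≥ 2, Σ ∈ ℰ, T = (T_1,…,T_n) ~ N(0,Σ), and D_i = g(T_i). Then for every arm k ∈ {1,…,K} and all i, j ∈ {1,…,n}, Cov(1{D_i = k}, 1{D_j = k}) = f_k(Σ_{ij}); that is, Cov_k(D) = f_k(Σ) with f_k applied entrywise. -/

import Mathlib

open MeasureTheory ProbabilityTheory Matrix Real
open scoped BigOperators ENNReal NNReal

noncomputable section

/-- Covariance of two real random variables on a measure space. -/
def cov {Ω : Type*} [MeasureSpace Ω] (U V : Ω → ℝ) : ℝ :=
  (∫ ω, U ω * V ω) - (∫ ω, U ω) * (∫ ω, V ω)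

/-- The standard normal CDF `Φ`. -/
def stdGaussianCDF (x : ℝ) : ℝ := (gaussianReal 0 1 (Set.Iic x)).toReal

/-- The set of values `t` mapped by the Gaussianization map `g` to arm `k`
(here arms are `0`-indexed: `k : Fin K` represents arm `k+1`, and `q m = Φ⁻¹(m/K)`):
arm `1` corresponds to `(−∞, q 1]`, arm `K` to `(q (K−1), ∞)`, and arm `a` with
`1 < a < K` to `(q (a−1), q a]`. Then `D_i = g(T_i)` iff `T_i ∈ armSet q K (D_i)`. -/
def armSet (q : ℕ → ℝ) (K : ℕ) (k : Fin K) : Set ℝ :=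
  if k.val = 0 then Set.Iic (q 1)
  else if k.val = K - 1 then Set.Ioi (q (K - 1))
  else Set.Ioc (q k.val) (q (k.val + 1))

/-- The function `r_{i,j}(ρ) = ∫₀^ρ (2π√(1−r²))⁻¹ exp(−(q_i²+q_j²−2 r q_i q_j)/(2(1−r²))) dr`. -/
def rfun (q : ℕ → ℝ) (i j : ℕ) (ρ : ℝ) : ℝ :=
  ∫ r in (0 : ℝ)..ρ,
    (2 * π * Real.sqrt (1 - r ^ 2))⁻¹ *
      Real.exp (-((q i ^ 2 + q j ^ 2 - 2 * r * q i * q j) / (2 * (1 - r ^ 2))))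

/-- The function `f_k` (arms `0`-indexed: `k : Fin K` represents arm `k+1`):
`f_1 = r_{1,1}`, `f_K = r_{K−1,K−1}`, and `f_a = r_{a−1,a−1} + r_{a,a} − 2 r_{a−1,a}`
for `1 < a < K`. -/
def fkfun (q : ℕ → ℝ) (K : ℕ) (k : Fin K) (ρ : ℝ) : ℝ :=
  if k.val = 0 then rfun q 1 1 ρ
  else if k.val = K - 1 then rfun q (K - 1) (K - 1) ρ
  else rfun q k.val k.val ρ + rfun q (k.val + 1) (k.val + 1) ρ
    - 2 * rfun q k.val (k.val + 1) ρ

/-!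
For a standard normal pair `(X, Y)` with correlation `ρ`, conditioning on `X = x` gives
`ℙ (X ≤ a, Y ≤ b) = ∫ x in Iic a, φ x * Φ ((b - ρ x) / √(1 - ρ²))`. The `ρ`-derivative of the
integrand is the `x`-derivative of the joint density at `(x, b)`, so the `ρ`-derivative of the
probability is the joint density at `(a, b)` (Plackett's identity). Integrating from `ρ = 0`, where
`X` and `Y` are independent, shows that `∫ r in 0..ρ` of the density is the covariance of the
indicators of `X ≤ a` and `Y ≤ b`. This persists at `ρ = ±1` because the probability is continuous
in `ρ` on `[-1, 1]`. Every arm is a half-line or a difference of two half-lines, and `f_k` is the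
bilinear expansion of the covariance of its indicators.
-/

section UnivariateGaussian

variable (μ : ℝ) {v : ℝ≥0}

lemma continuous_gaussianPDFReal (v : ℝ≥0) : Continuous (gaussianPDFReal μ v) := by
  unfold gaussianPDFReal
  fun_prop

lemma gaussianPDFReal_le (v : ℝ≥0) (x : ℝ) : gaussianPDFReal μ v x ≤ (√(2 * π * v))⁻¹ :=
  mul_le_of_le_one_right (by positivity) <|
    Real.exp_le_one_iff.2 <| div_nonpos_of_nonpos_of_nonneg (by simp [sq_nonneg]) (by positivity)

lemma hasDerivAt_gaussianPDFReal (v : ℝ≥0) (x : ℝ) :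
    HasDerivAt (gaussianPDFReal μ v) ((μ - x) / v * gaussianPDFReal μ v x) x := by
  have hexponent : HasDerivAt (fun y ↦ -(y - μ) ^ 2 / (2 * v)) ((μ - x) / v) x := by
    refine (((((hasDerivAt_id x).sub_const μ).pow 2).neg).div_const (2 * (v : ℝ))).congr_deriv ?_
    simp only [id, Nat.cast_ofNat]
    rw [← mul_div_mul_left (μ - x) (v : ℝ) two_ne_zero]
    ring
  refine (hexponent.exp.const_mul (√(2 * π * v))⁻¹).congr_deriv ?_
  rw [gaussianPDFReal]
  ring

lemma cdf_gaussianReal_eq_integral (hv : v ≠ 0) (x : ℝ) :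
    cdf (gaussianReal μ v) x = ∫ t in Set.Iic x, gaussianPDFReal μ v t := by
  rw [cdf_eq_real, measureReal_def, gaussianReal_apply_eq_integral μ hv,
    ENNReal.toReal_ofReal (integral_nonneg fun t ↦ gaussianPDFReal_nonneg μ v t)]

lemma hasDerivAt_cdf_gaussianReal (hv : v ≠ 0) (x : ℝ) :
    HasDerivAt (cdf (gaussianReal μ v)) (gaussianPDFReal μ v x) x := by
  have hcont := continuous_gaussianPDFReal μ v
  have hint : ∀ s, IntegrableOn (gaussianPDFReal μ v) s := fun s ↦
    (integrable_gaussianPDFReal μ v).integrableOn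
  have hcdf : cdf (gaussianReal μ v) =
      fun y ↦ cdf (gaussianReal μ v) 0 + ∫ t in (0 : ℝ)..y, gaussianPDFReal μ v t := by
    ext y
    rw [cdf_gaussianReal_eq_integral μ hv, cdf_gaussianReal_eq_integral μ hv,
      ← intervalIntegral.integral_Iic_sub_Iic (hint _) (hint _), add_sub_cancel]
  rw [hcdf]
  exact (intervalIntegral.integral_hasDerivAt_right (hcont.intervalIntegrable _ _)
    hcont.stronglyMeasurable.stronglyMeasurableAtFilter hcont.continuousAt).const_add _

lemma continuous_cdf_gaussianReal (hv : v ≠ 0) : Continuous (cdf (gaussianReal μ v)) :=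
  continuous_iff_continuousAt.2 fun x ↦ (hasDerivAt_cdf_gaussianReal μ hv x).continuousAt

lemma integrable_const_mul_abs_add_abs_div (v : ℝ≥0) (c a d : ℝ) :
    Integrable (fun x ↦ c * ((|a| + |x|) / d)) (gaussianReal μ v) :=
  (((integrable_const |a|).add (IsGaussian.integrable_id (μ := gaussianReal μ v)).abs).div_const
    d).const_mul c

variable {μ}

lemma setIntegral_gaussianReal_eq_setIntegral_smul {E : Type*} [NormedAddCommGroup E]
    [NormedSpace ℝ E] (hv : v ≠ 0) {s : Set ℝ} (hs : MeasurableSet s) (f : ℝ → E) :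
    ∫ x in s, f x ∂gaussianReal μ v = ∫ x in s, gaussianPDFReal μ v x • f x := by
  simp only [← integral_indicator hs, integral_gaussianReal_eq_integral_smul hv,
    Set.indicator_smul]

lemma integrableOn_gaussianReal_iff {E : Type*} [NormedAddCommGroup E]
    [NormedSpace ℝ E] (hv : v ≠ 0) {s : Set ℝ} (hs : MeasurableSet s) (f : ℝ → E) :
    IntegrableOn f s (gaussianReal μ v) ↔ IntegrableOn (fun x ↦ gaussianPDFReal μ v x • f x) s := by
  rw [gaussianReal_of_var_ne_zero μ hv, IntegrableOn, restrict_withDensity hs,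
    integrable_withDensity_iff_integrable_smul' (measurable_gaussianPDF μ v)
      (ae_of_all _ fun _ ↦ gaussianPDF_lt_top)]
  simp only [toReal_gaussianPDF, IntegrableOn]

end UnivariateGaussian

section StandardBinormal

local notation "γ" => gaussianReal 0 1
local notation "φ" => gaussianPDFReal 0 1
local notation "Φ" => cdf (gaussianReal 0 1)

/-- The density at `(x, y)` of the centred bivariate normal law with unit variances and correlation
`ρ ∈ (-1, 1)`; it is the integrand of `rfun`. For `|ρ| ≥ 1` it takes the junk value `0`. -/
def stdBinormalPDF (ρ x y : ℝ) : ℝ :=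
  (2 * π * √(1 - ρ ^ 2))⁻¹ * exp (-((x ^ 2 + y ^ 2 - 2 * ρ * x * y) / (2 * (1 - ρ ^ 2))))

/-- The centred bivariate normal law with unit variances and correlation `ρ ∈ [-1, 1]`, realised as
the law of `(X, ρ X + √(1 - ρ²) Z)` for independent standard normal `X` and `Z`. -/
def stdBinormal (ρ : ℝ) : Measure (ℝ × ℝ) :=
  (Measure.prod γ γ).map fun p ↦ (p.1, ρ * p.1 + √(1 - ρ ^ 2) * p.2)

/-- The joint distribution function of `stdBinormal ρ`, that is `ℙ (X ≤ a, Y ≤ b)` for standard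
normal `X`, `Y` with correlation `ρ`. -/
def stdBinormalCDF (ρ a b : ℝ) : ℝ := (stdBinormal ρ).real (Set.Iic a ×ˢ Set.Iic b)

instance isGaussian_stdBinormal (ρ : ℝ) : IsGaussian (stdBinormal ρ) := by
  let L : ℝ × ℝ →L[ℝ] ℝ × ℝ := (ContinuousLinearMap.fst ℝ ℝ ℝ).prod
    (ρ • ContinuousLinearMap.fst ℝ ℝ ℝ + √(1 - ρ ^ 2) • ContinuousLinearMap.snd ℝ ℝ ℝ)
  exact inferInstanceAs (IsGaussian ((Measure.prod γ γ).map L))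

lemma one_sub_sq_pos {ρ : ℝ} (hρ : ρ ∈ Set.Ioo (-1) 1) : 0 < 1 - ρ ^ 2 :=
  sub_pos.2 <| (sq_lt_one_iff_abs_lt_one ρ).2 (abs_lt.2 hρ)

lemma stdBinormalPDF_nonneg (ρ x y : ℝ) : 0 ≤ stdBinormalPDF ρ x y := by
  unfold stdBinormalPDF
  positivity

lemma stdBinormalPDF_comm (ρ x y : ℝ) : stdBinormalPDF ρ x y = stdBinormalPDF ρ y x := by
  unfold stdBinormalPDF
  ring_nf

lemma gaussianPDFReal_mul_gaussianPDFReal_standardize {ρ : ℝ} (hρ : ρ ∈ Set.Ioo (-1) 1) (x y : ℝ) :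
    φ x * φ ((y - ρ * x) / √(1 - ρ ^ 2)) = √(1 - ρ ^ 2) * stdBinormalPDF ρ x y := by
  have hvar := one_sub_sq_pos hρ
  have hsqrt : √(1 - ρ ^ 2) ≠ 0 := (Real.sqrt_pos.2 hvar).ne'
  have hexponent : -x ^ 2 / 2 + -(y - ρ * x) ^ 2 / (1 - ρ ^ 2) / 2
      = -((x ^ 2 + y ^ 2 - 2 * ρ * x * y) / (2 * (1 - ρ ^ 2))) := by
    field_simp
    ring
  simp only [gaussianPDFReal, stdBinormalPDF, NNReal.coe_one, mul_one, sub_zero]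
  rw [mul_mul_mul_comm, ← mul_inv, Real.mul_self_sqrt (by positivity), ← Real.exp_add, div_pow,
    Real.sq_sqrt hvar.le, ← neg_div (1 - ρ ^ 2), hexponent]
  field_simp

lemma stdBinormalPDF_eq_mul_gaussianPDFReal {ρ : ℝ} (hρ : ρ ∈ Set.Ioo (-1) 1) (x y : ℝ) :
    stdBinormalPDF ρ x y = φ y * gaussianPDFReal (ρ * y) (1 - ρ ^ 2).toNNReal x := by
  have hvar := one_sub_sq_pos hρ
  have hsqrt : √(2 * π) * √(2 * π * (1 - ρ ^ 2)) = 2 * π * √(1 - ρ ^ 2) := by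
    rw [Real.sqrt_mul (by positivity) (1 - ρ ^ 2), ← mul_assoc, Real.mul_self_sqrt (by positivity)]
  have hexponent : -y ^ 2 / 2 + -(x - ρ * y) ^ 2 / (2 * (1 - ρ ^ 2))
      = -((x ^ 2 + y ^ 2 - 2 * ρ * x * y) / (2 * (1 - ρ ^ 2))) := by
    field_simp
    ring
  simp only [gaussianPDFReal, stdBinormalPDF, NNReal.coe_one, mul_one, sub_zero,
    Real.coe_toNNReal _ hvar.le]
  rw [mul_mul_mul_comm, ← mul_inv, hsqrt, ← Real.exp_add, hexponent]

lemma hasDerivAt_stdBinormalPDF {ρ : ℝ} (hρ : ρ ∈ Set.Ioo (-1) 1) (x y : ℝ) :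
    HasDerivAt (fun x ↦ stdBinormalPDF ρ x y)
      ((ρ * y - x) / (1 - ρ ^ 2) * stdBinormalPDF ρ x y) x := by
  simp only [stdBinormalPDF_eq_mul_gaussianPDFReal hρ]
  refine ((hasDerivAt_gaussianPDFReal _ _ x).const_mul _).congr_deriv ?_
  rw [Real.coe_toNNReal _ (one_sub_sq_pos hρ).le, mul_left_comm]

lemma integrable_stdBinormalPDF {ρ : ℝ} (hρ : ρ ∈ Set.Ioo (-1) 1) (y : ℝ) :
    Integrable fun x ↦ stdBinormalPDF ρ x y := by
  simp only [stdBinormalPDF_eq_mul_gaussianPDFReal hρ]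
  exact (integrable_gaussianPDFReal _ _).const_mul _

lemma hasDerivAt_standardize {ρ : ℝ} (hρ : ρ ∈ Set.Ioo (-1) 1) (x y : ℝ) :
    HasDerivAt (fun r ↦ (y - r * x) / √(1 - r ^ 2)) ((ρ * y - x) / √(1 - ρ ^ 2) ^ 3) ρ := by
  have hvar := one_sub_sq_pos hρ
  have hsqrt : √(1 - ρ ^ 2) ≠ 0 := (Real.sqrt_pos.2 hvar).ne'
  have hnum : HasDerivAt (fun r ↦ y - r * x) (-x) ρ := by
    simpa using ((hasDerivAt_id ρ).mul_const x).const_sub y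
  have hden : HasDerivAt (fun r : ℝ ↦ 1 - r ^ 2) (-(2 * ρ)) ρ := by
    simpa using (hasDerivAt_pow 2 ρ).const_sub 1
  refine (hnum.div (hden.sqrt hvar.ne') hsqrt).congr_deriv ?_
  field_simp
  rw [Real.sq_sqrt hvar.le]
  ring

lemma stdBinormalCDF_eq_setIntegral {ρ : ℝ} (hρ : ρ ∈ Set.Ioo (-1) 1) (a b : ℝ) :
    stdBinormalCDF ρ a b = ∫ x in Set.Iic a, Φ ((b - ρ * x) / √(1 - ρ ^ 2)) ∂γ := by
  have hsqrt : 0 < √(1 - ρ ^ 2) := Real.sqrt_pos.2 (one_sub_sq_pos hρ)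
  have hrect : MeasurableSet (Set.Iic a ×ˢ Set.Iic b) := measurableSet_Iic.prod measurableSet_Iic
  have hmeas : Measurable fun p : ℝ × ℝ ↦ (p.1, ρ * p.1 + √(1 - ρ ^ 2) * p.2) := by fun_prop
  rw [stdBinormalCDF, stdBinormal, map_measureReal_apply hmeas hrect, measureReal_def,
    Measure.prod_apply (hmeas hrect), ← integral_toReal
      (measurable_measure_prodMk_left (hmeas hrect)).aemeasurable
      (ae_of_all _ fun x ↦ measure_lt_top _ _),
    ← integral_indicator measurableSet_Iic]
  congr with x
  by_cases hx : x ≤ a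
  · have hslice : Prod.mk x ⁻¹' ((fun p ↦ (p.1, ρ * p.1 + √(1 - ρ ^ 2) * p.2)) ⁻¹'
        Set.Iic a ×ˢ Set.Iic b) = Set.Iic ((b - ρ * x) / √(1 - ρ ^ 2)) := by
      ext z
      simp [hx, le_div_iff₀ hsqrt, le_sub_iff_add_le', mul_comm z]
    rw [hslice, Set.indicator_of_mem (Set.mem_Iic.2 hx), cdf_eq_real, measureReal_def]
  · simp [Set.indicator, Set.preimage, hx]

lemma stdBinormalCDF_zero (a b : ℝ) : stdBinormalCDF 0 a b = Φ a * Φ b := by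
  rw [stdBinormalCDF_eq_setIntegral (by norm_num)]
  simp [cdf_eq_real]

lemma hasDerivAt_cdf_standardize {ρ : ℝ} (hρ : ρ ∈ Set.Ioo (-1) 1) (x y : ℝ) :
    HasDerivAt (fun r ↦ Φ ((y - r * x) / √(1 - r ^ 2)))
      (φ ((y - ρ * x) / √(1 - ρ ^ 2)) * ((ρ * y - x) / √(1 - ρ ^ 2) ^ 3)) ρ :=
  (hasDerivAt_cdf_gaussianReal 0 one_ne_zero _).comp ρ (hasDerivAt_standardize hρ x y)

lemma norm_deriv_cdf_standardize_le {ρ c : ℝ} (hρ : |ρ| ≤ c) (hc : c < 1) (x y : ℝ) :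
    ‖φ ((y - ρ * x) / √(1 - ρ ^ 2)) * ((ρ * y - x) / √(1 - ρ ^ 2) ^ 3)‖
      ≤ (√(2 * π))⁻¹ * ((|y| + |x|) / √(1 - c ^ 2) ^ 3) := by
  have hc0 : 0 ≤ c := (abs_nonneg ρ).trans hρ
  have hsqrt_c : 0 < √(1 - c ^ 2) := Real.sqrt_pos.2 (one_sub_sq_pos ⟨by linarith, hc⟩)
  have hsqrt : √(1 - c ^ 2) ≤ √(1 - ρ ^ 2) :=
    Real.sqrt_le_sqrt (sub_le_sub_left (sq_le_sq' (abs_le.1 hρ).1 (abs_le.1 hρ).2) 1)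
  have hdensity : φ ((y - ρ * x) / √(1 - ρ ^ 2)) ≤ (√(2 * π))⁻¹ := by
    simpa using gaussianPDFReal_le 0 1 ((y - ρ * x) / √(1 - ρ ^ 2))
  have hnumerator : |ρ * y - x| ≤ |y| + |x| := by
    refine (abs_sub _ _).trans ?_
    rw [abs_mul]
    gcongr
    exact mul_le_of_le_one_left (abs_nonneg y) (hρ.trans hc.le)
  rw [norm_mul, norm_div, norm_pow, Real.norm_of_nonneg (gaussianPDFReal_nonneg _ _ _),
    Real.norm_of_nonneg (Real.sqrt_nonneg _), Real.norm_eq_abs]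
  gcongr

lemma integrable_deriv_cdf_standardize {ρ : ℝ} (hρ : ρ ∈ Set.Ioo (-1) 1) (y : ℝ) :
    Integrable (fun x ↦ φ ((y - ρ * x) / √(1 - ρ ^ 2)) * ((ρ * y - x) / √(1 - ρ ^ 2) ^ 3)) γ := by
  have hcont := continuous_gaussianPDFReal 0 1
  exact (integrable_const_mul_abs_add_abs_div 0 1 _ y _).mono'
    (Continuous.aestronglyMeasurable (by fun_prop))
    (ae_of_all _ fun x ↦ norm_deriv_cdf_standardize_le le_rfl (abs_lt.2 hρ) x y)

/- The `ρ`-derivative of the conditional distribution function, weighted by the density `φ`, is the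
`x`-derivative of the bivariate density, so that its integral is a boundary term. -/
lemma setIntegral_deriv_cdf_standardize {ρ : ℝ} (hρ : ρ ∈ Set.Ioo (-1) 1) (a b : ℝ) :
    ∫ x in Set.Iic a, φ ((b - ρ * x) / √(1 - ρ ^ 2)) * ((ρ * b - x) / √(1 - ρ ^ 2) ^ 3) ∂γ
      = stdBinormalPDF ρ a b := by
  have hvar := one_sub_sq_pos hρ
  have hsqrt : √(1 - ρ ^ 2) ≠ 0 := (Real.sqrt_pos.2 hvar).ne'
  have hweighted : ∀ x, φ x • (φ ((b - ρ * x) / √(1 - ρ ^ 2)) *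
      ((ρ * b - x) / √(1 - ρ ^ 2) ^ 3)) = (ρ * b - x) / (1 - ρ ^ 2) * stdBinormalPDF ρ x b := by
    intro x
    rw [smul_eq_mul, ← mul_assoc, gaussianPDFReal_mul_gaussianPDFReal_standardize hρ,
      pow_succ √(1 - ρ ^ 2) 2, Real.sq_sqrt hvar.le]
    field_simp
  have hint := (integrableOn_gaussianReal_iff one_ne_zero (measurableSet_Iic (a := a)) _).1
    (integrable_deriv_cdf_standardize hρ b).integrableOn
  rw [setIntegral_gaussianReal_eq_setIntegral_smul one_ne_zero measurableSet_Iic]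
  simp only [hweighted] at hint ⊢
  have hderiv : ∀ x ∈ Set.Iic a, HasDerivAt (fun x ↦ stdBinormalPDF ρ x b)
    ((ρ * b - x) / (1 - ρ ^ 2) * stdBinormalPDF ρ x b) x := fun x _ ↦
      hasDerivAt_stdBinormalPDF hρ x b
  have hlim : Filter.Tendsto (fun x ↦ stdBinormalPDF ρ x b) Filter.atBot (nhds 0) :=
    tendsto_zero_of_hasDerivAt_of_integrableOn_Iic hderiv hint
      (integrable_stdBinormalPDF hρ b).integrableOn
  rw [integral_Iic_of_hasDerivAt_of_tendsto' hderiv hint hlim, sub_zero]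

lemma hasDerivAt_stdBinormalCDF {ρ : ℝ} (hρ : ρ ∈ Set.Ioo (-1) 1) (a b : ℝ) :
    HasDerivAt (fun r ↦ stdBinormalCDF r a b) (stdBinormalPDF ρ a b) ρ := by
  obtain ⟨c, hρc, hc⟩ : ∃ c, |ρ| < c ∧ c < 1 := exists_between (abs_lt.2 hρ)
  have hmem : ∀ {r}, r ∈ Set.Ioo (-c) c → r ∈ Set.Ioo (-1) 1 := fun hr ↦
    Set.Ioo_subset_Ioo (neg_le_neg hc.le) hc.le hr
  have hcdf := continuous_cdf_gaussianReal 0 one_ne_zero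
  have hmeas : ∀ r, AEStronglyMeasurable (fun x ↦ Φ ((b - r * x) / √(1 - r ^ 2)))
      (Measure.restrict γ (Set.Iic a)) := fun r ↦ Continuous.aestronglyMeasurable (by fun_prop)
  have hintegral := (hasDerivAt_integral_of_dominated_loc_of_deriv_le (Ioo_mem_nhds
    (abs_lt.1 hρc).1 (abs_lt.1 hρc).2) (.of_forall hmeas)
    (Integrable.of_bound (hmeas ρ) 1 (ae_of_all _ fun x ↦ ?_))
    (integrable_deriv_cdf_standardize hρ b).restrict.aestronglyMeasurable
    (ae_of_all _ fun x r hr ↦ norm_deriv_cdf_standardize_le (abs_lt.2 hr).le hc x b)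
    (integrable_const_mul_abs_add_abs_div 0 1 _ b _).restrict
    (ae_of_all _ fun x r hr ↦ hasDerivAt_cdf_standardize (hmem hr) x b)).2
  · rw [setIntegral_deriv_cdf_standardize hρ] at hintegral
    refine hintegral.congr_of_eventuallyEq ?_
    filter_upwards [Ioo_mem_nhds hρ.1 hρ.2] with r hr
    exact stdBinormalCDF_eq_setIntegral hr a b
  · rw [Real.norm_of_nonneg (cdf_nonneg _ _)]
    exact cdf_le_one _ _

lemma hasLaw_fst_stdBinormal (ρ : ℝ) : HasLaw Prod.fst γ (stdBinormal ρ) where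
  map_eq := by
    rw [stdBinormal, Measure.map_map measurable_fst (by fun_prop)]
    exact Measure.map_fst_prod.trans (by simp)

lemma integral_snd_stdBinormal (ρ : ℝ) : ∫ p, p.2 ∂stdBinormal ρ = 0 := by
  have hfst : Integrable (fun p ↦ p.1) (Measure.prod γ γ) :=
    (IsGaussian.integrable_id (μ := γ)).comp_fst γ
  have hsnd : Integrable (fun p ↦ p.2) (Measure.prod γ γ) :=
    (IsGaussian.integrable_id (μ := γ)).comp_snd γ
  rw [stdBinormal, integral_map (by fun_prop) (by fun_prop),
    integral_add (hfst.const_mul _) (hsnd.const_mul _), integral_const_mul, integral_const_mul,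
    integral_fun_fst (fun x ↦ x), integral_fun_snd (fun x ↦ x)]
  simp [integral_id_gaussianReal]

lemma covariance_fst_snd_stdBinormal (ρ : ℝ) : cov[Prod.fst, Prod.snd; stdBinormal ρ] = ρ := by
  have hid : MemLp id 2 γ := memLp_id_gaussianReal 2
  have hvar : Var[fun p ↦ p.1; Measure.prod γ γ] = 1 := by
    simpa using measurePreserving_fst.variance_fun_comp (μ := Measure.prod γ γ) (ν := γ)
      (f := id) aemeasurable_id
  have hcov : cov[fun p ↦ p.1, fun p ↦ p.2; Measure.prod γ γ] = 0 := covariance_fst_snd_prod hid hid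
  rw [stdBinormal, covariance_map_fun (by fun_prop) (by fun_prop) (by fun_prop)]
  refine (covariance_add_right (hid.comp_fst γ) ((hid.comp_fst γ).const_mul ρ)
    ((hid.comp_snd γ).const_mul _)).trans ?_
  simp only [id]
  rw [covariance_const_mul_right, covariance_const_mul_right, covariance_self (by fun_prop), hvar,
    hcov, mul_zero, add_zero, mul_one]

lemma variance_snd_stdBinormal {ρ : ℝ} (hρ : ρ ∈ Set.Icc (-1) 1) :
    Var[Prod.snd; stdBinormal ρ] = 1 := by
  have hid : MemLp id 2 γ := memLp_id_gaussianReal 2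
  have hvar : 0 ≤ 1 - ρ ^ 2 := sub_nonneg.2 <| (sq_le_one_iff_abs_le_one ρ).2 (abs_le.2 hρ)
  rw [stdBinormal, variance_map (by fun_prop) (by fun_prop)]
  exact (variance_add_prod (hid.const_mul ρ) (hid.const_mul _)).trans <| by
    rw [variance_const_mul, variance_const_mul, variance_id_gaussianReal, Real.sq_sqrt hvar]
    simp

lemma hasLaw_snd_stdBinormal {ρ : ℝ} (hρ : ρ ∈ Set.Icc (-1) 1) :
    HasLaw Prod.snd γ (stdBinormal ρ) where
  map_eq := by
    have hsnd : HasGaussianLaw Prod.snd (stdBinormal ρ) :=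
      IsGaussian.hasGaussianLaw_id.map (ContinuousLinearMap.snd ℝ ℝ ℝ)
    rw [hsnd.map_eq_gaussianReal, integral_snd_stdBinormal, variance_snd_stdBinormal hρ,
      Real.toNNReal_one]

lemma ae_linear_combination_ne {ρ : ℝ} (hρ : ρ ∈ Set.Icc (-1) 1) (b : ℝ) :
    ∀ᵐ p ∂Measure.prod γ γ, ρ * p.1 + √(1 - ρ ^ 2) * p.2 ≠ b := by
  have := nullSingletonClass_gaussianReal (μ := 0) one_ne_zero
  have hne : ∀ᵐ y ∂(stdBinormal ρ).map Prod.snd, y ≠ b := by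
    rw [(hasLaw_snd_stdBinormal hρ).map_eq]
    exact compl_mem_ae_iff.2 (measure_singleton b)
  exact ae_of_ae_map (f := fun p : ℝ × ℝ ↦ (p.1, ρ * p.1 + √(1 - ρ ^ 2) * p.2)) (by fun_prop) <|
    ae_of_ae_map measurable_snd.aemeasurable hne

lemma continuousOn_stdBinormalCDF (a b : ℝ) :
    ContinuousOn (fun ρ ↦ stdBinormalCDF ρ a b) (Set.Icc (-1) 1) := by
  intro ρ hρ
  let E : ℝ → Set (ℝ × ℝ) := fun r ↦
    (fun p ↦ (p.1, r * p.1 + √(1 - r ^ 2) * p.2)) ⁻¹' (Set.Iic a ×ˢ Set.Iic b)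
  have hmap : ∀ r, Measurable fun p : ℝ × ℝ ↦ (p.1, r * p.1 + √(1 - r ^ 2) * p.2) := by
    fun_prop
  have hrect : MeasurableSet (Set.Iic a ×ˢ Set.Iic b) := measurableSet_Iic.prod measurableSet_Iic
  have hE : ∀ r, stdBinormalCDF r a b = (Measure.prod γ γ).real (E r) := fun r ↦
    map_measureReal_apply (hmap r) hrect
  have hlim : ∀ᵐ p ∂Measure.prod γ γ, ∀ᶠ r in nhds ρ, p ∈ E r ↔ p ∈ E ρ := by
    filter_upwards [ae_linear_combination_ne hρ b] with p hp
    have hcont : Continuous fun r : ℝ ↦ r * p.1 + √(1 - r ^ 2) * p.2 := by fun_prop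
    rcases hp.lt_or_gt with hlt | hgt
    · filter_upwards [hcont.continuousAt.eventually_lt_const hlt] with r hr
      simp [E, hr.le, hlt.le]
    · filter_upwards [hcont.continuousAt.eventually_const_lt hgt] with r hr
      simp [E, hr.not_ge, hgt.not_ge]
  simp only [hE]
  refine ContinuousAt.continuousWithinAt ?_
  exact (ENNReal.tendsto_toReal (measure_ne_top _ _)).comp <|
    tendsto_measure_of_ae_tendsto_indicator_of_isFiniteMeasure _ (hmap ρ hrect)
      (fun r ↦ hmap r hrect) hlim

lemma stdBinormalCDF_eq_add_integral {ρ : ℝ} (hρ : ρ ∈ Set.Icc (-1) 1) (a b : ℝ) :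
    stdBinormalCDF ρ a b = Φ a * Φ b + ∫ r in (0 : ℝ)..ρ, stdBinormalPDF r a b := by
  have hzero : (0 : ℝ) ∈ Set.Icc (-1) 1 := by norm_num
  have hcont := (continuousOn_stdBinormalCDF a b).mono (Set.uIcc_subset_Icc hzero hρ)
  have hderiv : ∀ r ∈ Set.Ioo (min 0 ρ) (max 0 ρ),
      HasDerivAt (fun r ↦ stdBinormalCDF r a b) (stdBinormalPDF r a b) r := fun r hr ↦
    hasDerivAt_stdBinormalCDF (Set.Ioo_subset_Ioo (le_min hzero.1 hρ.1)
      (max_le hzero.2 hρ.2) hr) a b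
  have hint := intervalIntegral.intervalIntegrable_deriv_of_nonneg hcont hderiv
    fun r _ ↦ stdBinormalPDF_nonneg r a b
  rw [intervalIntegral.integral_eq_sub_of_hasDeriv_right hcont
    (fun r hr ↦ (hderiv r hr).hasDerivWithinAt) hint, stdBinormalCDF_zero, add_sub_cancel]

end StandardBinormal

section GaussianPair

variable {Ω : Type*} [MeasurableSpace Ω] {P : Measure Ω} {X Y : Ω → ℝ}

lemma charFunDual_map_prodMk (hXY : HasGaussianLaw (fun ω ↦ (X ω, Y ω)) P)
    (L : StrongDual ℝ (ℝ × ℝ)) :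
    charFunDual (P.map fun ω ↦ (X ω, Y ω)) L =
      Complex.exp (((L (1, 0) * P[X] + L (0, 1) * P[Y] : ℝ) : ℂ) * Complex.I -
        ((L (1, 0) ^ 2 * Var[X; P] + 2 * (L (1, 0) * (L (0, 1) * cov[X, Y; P])) +
          L (0, 1) ^ 2 * Var[Y; P] : ℝ) : ℂ) / 2) := by
  have := hXY.isProbabilityMeasure
  have hX := hXY.fst.memLp_two.const_mul (L (1, 0))
  have hY := hXY.snd.memLp_two.const_mul (L (0, 1))
  have hL : ∀ ω, L (X ω, Y ω) = L (1, 0) * X ω + L (0, 1) * Y ω := fun ω ↦ by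
    rw [mul_comm _ (X ω), mul_comm _ (Y ω), ← smul_eq_mul, ← smul_eq_mul, ← map_smul, ← map_smul,
      ← map_add]
    simp
  rw [hXY.charFunDual_map_eq_fun]
  simp only [hL]
  rw [integral_add (hX.integrable one_le_two) (hY.integrable one_le_two),
    integral_const_mul, integral_const_mul, variance_fun_add hX hY, variance_const_mul,
    variance_const_mul, covariance_const_mul_left, covariance_const_mul_right]

lemma two_mul_abs_covariance_le [IsFiniteMeasure P] (hX : MemLp X 2 P) (hY : MemLp Y 2 P) :
    2 * |cov[X, Y; P]| ≤ Var[X; P] + Var[Y; P] := by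
  have hadd := variance_add hX hY ▸ variance_nonneg (X + Y) P
  have hsub := variance_sub hX hY ▸ variance_nonneg (X - Y) P
  rcases abs_cases cov[X, Y; P] with h | h <;> linarith

lemma covariance_mem_Icc [IsFiniteMeasure P] (hX : MemLp X 2 P) (hY : MemLp Y 2 P)
    (hXvar : Var[X; P] = 1) (hYvar : Var[Y; P] = 1) : cov[X, Y; P] ∈ Set.Icc (-1) 1 :=
  abs_le.1 <| by linarith [two_mul_abs_covariance_le hX hY]

lemma hasLaw_stdBinormal (hXY : HasGaussianLaw (fun ω ↦ (X ω, Y ω)) P)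
    (hXmean : P[X] = 0) (hYmean : P[Y] = 0) (hXvar : Var[X; P] = 1) (hYvar : Var[Y; P] = 1) :
    HasLaw (fun ω ↦ (X ω, Y ω)) (stdBinormal cov[X, Y; P]) P where
  aemeasurable := hXY.aemeasurable
  map_eq := by
    have := hXY.isProbabilityMeasure
    set ρ := cov[X, Y; P]
    have hρ : ρ ∈ Set.Icc (-1) 1 :=
      covariance_mem_Icc hXY.fst.memLp_two hXY.snd.memLp_two hXvar hYvar
    have hmodel : HasGaussianLaw (fun p ↦ (Prod.fst p, Prod.snd p)) (stdBinormal ρ) :=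
      IsGaussian.hasGaussianLaw_id
    refine Measure.ext_of_charFunDual (funext fun L ↦ ?_)
    conv_rhs => rw [← Measure.map_id (μ := stdBinormal ρ)]
    rw [charFunDual_map_prodMk hXY]
    refine Eq.trans ?_ (charFunDual_map_prodMk hmodel L).symm
    rw [hXmean, hYmean, hXvar, hYvar, (hasLaw_fst_stdBinormal ρ).integral_eq,
      (hasLaw_fst_stdBinormal ρ).variance_eq, integral_snd_stdBinormal, variance_snd_stdBinormal hρ,
      covariance_fst_snd_stdBinormal, integral_id_gaussianReal, variance_id_gaussianReal,
      NNReal.coe_one]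

end GaussianPair

section EventCovariance

/-- The covariance `ℙ (s ∩ t) - ℙ s ℙ t` of the indicators of two events `s` and `t`. -/
def eventCov {Ω : Type*} [MeasurableSpace Ω] (P : Measure Ω) (s t : Set Ω) : ℝ :=
  cov[s.indicator 1, t.indicator 1; P]

variable {Ω : Type*} [MeasurableSpace Ω] {P : Measure Ω}

lemma memLp_indicator_one [IsFiniteMeasure P] {s : Set Ω} (hs : MeasurableSet s) :
    MemLp (s.indicator (1 : Ω → ℝ)) 2 P :=
  (memLp_const 1).indicator hs

variable [IsProbabilityMeasure P] {s s' t t' : Set Ω}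

lemma eventCov_eq_sub (hs : MeasurableSet s) (ht : MeasurableSet t) :
    eventCov P s t = P.real (s ∩ t) - P.real s * P.real t := by
  rw [eventCov, covariance_eq_sub (memLp_indicator_one hs) (memLp_indicator_one ht),
    ← Set.inter_indicator_one, integral_indicator_one (hs.inter ht), integral_indicator_one hs,
    integral_indicator_one ht]

lemma eventCov_compl_compl (hs : MeasurableSet s) (ht : MeasurableSet t) :
    eventCov P sᶜ tᶜ = eventCov P s t := by
  rw [eventCov, Set.indicator_compl, Set.indicator_compl]
  refine (covariance_const_sub_left ((memLp_indicator_one hs).integrable one_le_two) 1).trans ?_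
  exact neg_eq_iff_eq_neg.2 <|
    covariance_const_sub_right ((memLp_indicator_one ht).integrable one_le_two) 1

lemma eventCov_sdiff_sdiff (hs : MeasurableSet s) (hs' : MeasurableSet s') (ht : MeasurableSet t)
    (ht' : MeasurableSet t') (hss' : s' ⊆ s) (htt' : t' ⊆ t) :
    eventCov P (s \ s') (t \ t')
      = eventCov P s t - eventCov P s t' - eventCov P s' t + eventCov P s' t' := by
  simp only [eventCov, Set.indicator_sdiff hss', Set.indicator_sdiff htt']
  exact covariance_sub_sub (memLp_indicator_one hs) (memLp_indicator_one hs')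
    (memLp_indicator_one ht) (memLp_indicator_one ht')

end EventCovariance

section ArmCovariance

variable {ρ : ℝ}

lemma eventCov_stdBinormal_Iic (hρ : ρ ∈ Set.Icc (-1) 1) (a b : ℝ) :
    eventCov (stdBinormal ρ) (Prod.fst ⁻¹' Set.Iic a) (Prod.snd ⁻¹' Set.Iic b)
      = ∫ r in (0 : ℝ)..ρ, stdBinormalPDF r a b := by
  have hfst : (stdBinormal ρ).real (Prod.fst ⁻¹' Set.Iic a) = cdf (gaussianReal 0 1) a := by
    rw [cdf_eq_real]
    exact (hasLaw_fst_stdBinormal ρ).measureReal_eq measurableSet_Iic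
  have hsnd : (stdBinormal ρ).real (Prod.snd ⁻¹' Set.Iic b) = cdf (gaussianReal 0 1) b := by
    rw [cdf_eq_real]
    exact (hasLaw_snd_stdBinormal hρ).measureReal_eq measurableSet_Iic
  rw [eventCov_eq_sub (measurable_fst measurableSet_Iic) (measurable_snd measurableSet_Iic), hfst,
    hsnd, ← Set.prod_eq, ← stdBinormalCDF, stdBinormalCDF_eq_add_integral hρ, add_sub_cancel_left]

lemma eventCov_stdBinormal_Ioi (hρ : ρ ∈ Set.Icc (-1) 1) (a b : ℝ) :
    eventCov (stdBinormal ρ) (Prod.fst ⁻¹' Set.Ioi a) (Prod.snd ⁻¹' Set.Ioi b)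
      = ∫ r in (0 : ℝ)..ρ, stdBinormalPDF r a b := by
  simp only [← Set.compl_Iic, Set.preimage_compl]
  rw [eventCov_compl_compl (measurable_fst measurableSet_Iic) (measurable_snd measurableSet_Iic),
    eventCov_stdBinormal_Iic hρ]

lemma eventCov_stdBinormal_Ioc (hρ : ρ ∈ Set.Icc (-1) 1) {a b c d : ℝ} (hab : a ≤ b)
    (hcd : c ≤ d) :
    eventCov (stdBinormal ρ) (Prod.fst ⁻¹' Set.Ioc a b) (Prod.snd ⁻¹' Set.Ioc c d)
      = (∫ r in (0 : ℝ)..ρ, stdBinormalPDF r b d) - (∫ r in (0 : ℝ)..ρ, stdBinormalPDF r b c)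
        - (∫ r in (0 : ℝ)..ρ, stdBinormalPDF r a d) + ∫ r in (0 : ℝ)..ρ, stdBinormalPDF r a c := by
  have hfst : ∀ x, MeasurableSet (Prod.fst ⁻¹' Set.Iic x : Set (ℝ × ℝ)) := fun x ↦
    measurable_fst measurableSet_Iic
  have hsnd : ∀ y, MeasurableSet (Prod.snd ⁻¹' Set.Iic y : Set (ℝ × ℝ)) := fun y ↦
    measurable_snd measurableSet_Iic
  simp only [← Set.Iic_sdiff_Iic, Set.preimage_sdiff]
  rw [eventCov_sdiff_sdiff (hfst b) (hfst a) (hsnd d) (hsnd c)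
    (Set.preimage_mono (Set.Iic_subset_Iic.2 hab)) (Set.preimage_mono (Set.Iic_subset_Iic.2 hcd))]
  simp only [eventCov_stdBinormal_Iic hρ]

lemma rfun_eq_integral_stdBinormalPDF (q : ℕ → ℝ) (i j : ℕ) (ρ : ℝ) :
    rfun q i j ρ = ∫ r in (0 : ℝ)..ρ, stdBinormalPDF r (q i) (q j) :=
  rfl

lemma rfun_comm (q : ℕ → ℝ) (i j : ℕ) (ρ : ℝ) : rfun q i j ρ = rfun q j i ρ := by
  simp only [rfun_eq_integral_stdBinormalPDF, stdBinormalPDF_comm _ (q i)]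

lemma eventCov_stdBinormal_armSet (hρ : ρ ∈ Set.Icc (-1) 1) {q : ℕ → ℝ} {K : ℕ}
    (hq : ∀ m, 0 < m → m + 1 < K → q m ≤ q (m + 1)) (k : Fin K) :
    eventCov (stdBinormal ρ) (Prod.fst ⁻¹' armSet q K k) (Prod.snd ⁻¹' armSet q K k)
      = fkfun q K k ρ := by
  unfold armSet fkfun
  split_ifs with hfirst hlast
  · exact eventCov_stdBinormal_Iic hρ _ _
  · exact eventCov_stdBinormal_Ioi hρ _ _
  · have hk := hq k (by omega) (by omega)
    rw [eventCov_stdBinormal_Ioc hρ hk hk]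
    simp only [← rfun_eq_integral_stdBinormalPDF]
    rw [rfun_comm q (k + 1) k]
    ring

lemma measurableSet_armSet (q : ℕ → ℝ) (K : ℕ) (k : Fin K) : MeasurableSet (armSet q K k) := by
  unfold armSet
  split_ifs
  exacts [measurableSet_Iic, measurableSet_Ioi, measurableSet_Ioc]

end ArmCovariance

section GaussianImage

variable {ι κ : Type*} [Fintype κ]

/-- The law of `A z` for a vector `z` of independent standard normal variables, that is the centred
Gaussian law on `ι → ℝ` with covariance matrix `A Aᵀ`. -/
def gaussianMulVec (A : Matrix ι κ ℝ) : Measure (ι → ℝ) :=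
  (Measure.pi fun _ : κ ↦ gaussianReal 0 1).map fun z ↦ A *ᵥ z

lemma measurable_mulVec (A : Matrix ι κ ℝ) : Measurable fun z : κ → ℝ ↦ A *ᵥ z :=
  measurable_pi_lambda _ fun i ↦ by
    simp only [mulVec, dotProduct]
    fun_prop

lemma iIndepFun_eval_pi_gaussianReal :
    iIndepFun (fun (k : κ) (z : κ → ℝ) ↦ z k) (Measure.pi fun _ : κ ↦ gaussianReal 0 1) :=
  iIndepFun_pi (X := fun _ x ↦ x) fun _ ↦ aemeasurable_id

instance isGaussian_pi_gaussianReal :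
    IsGaussian (Measure.pi fun _ : κ ↦ gaussianReal 0 1) := by
  have hcoord : ∀ i : κ, HasGaussianLaw (fun z : κ → ℝ ↦ z i)
      (Measure.pi fun _ : κ ↦ gaussianReal 0 1) := fun i ↦
    (measurePreserving_eval (fun _ : κ ↦ gaussianReal 0 1) i).hasLaw.hasGaussianLaw
  simpa using (iIndepFun_eval_pi_gaussianReal.hasGaussianLaw hcoord).isGaussian_map

instance isGaussian_gaussianMulVec [Finite ι] (A : Matrix ι κ ℝ) :
    IsGaussian (gaussianMulVec A) := by
  have := Fintype.ofFinite ι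
  exact isGaussian_map (LinearMap.toContinuousLinearMap A.mulVecLin)

lemma memLp_eval_pi_gaussianReal (k : κ) :
    MemLp (fun z ↦ z k) 2 (Measure.pi fun _ : κ ↦ gaussianReal 0 1) :=
  (memLp_id_gaussianReal 2).comp_measurePreserving (measurePreserving_eval _ k)

lemma integral_eval_gaussianMulVec (A : Matrix ι κ ℝ) (i : ι) :
    ∫ x, x i ∂gaussianMulVec A = 0 := by
  rw [gaussianMulVec, integral_map (measurable_mulVec A).aemeasurable
    (measurable_pi_apply i).aestronglyMeasurable]
  simp only [mulVec, dotProduct]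
  rw [integral_finsetSum _ fun k _ ↦
    ((memLp_eval_pi_gaussianReal k).integrable one_le_two).const_mul _]
  refine Finset.sum_eq_zero fun k _ ↦ ?_
  rw [integral_const_mul, integral_eval, integral_id_gaussianReal, mul_zero]

lemma covariance_eval_pi_gaussianReal [DecidableEq κ] (k l : κ) :
    cov[fun z ↦ z k, fun z ↦ z l; Measure.pi fun _ : κ ↦ gaussianReal 0 1]
      = (1 : Matrix κ κ ℝ) k l := by
  rcases eq_or_ne k l with rfl | hkl
  · rw [covariance_self (measurable_pi_apply k).aemeasurable, Matrix.one_apply_eq]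
    simpa using (measurePreserving_eval (fun _ : κ ↦ gaussianReal 0 1) k).variance_fun_comp
      (f := id) aemeasurable_id
  · rw [Matrix.one_apply_ne hkl]
    exact (iIndepFun_eval_pi_gaussianReal.indepFun hkl).covariance_eq_zero
      (memLp_eval_pi_gaussianReal k) (memLp_eval_pi_gaussianReal l)

lemma covariance_eval_gaussianMulVec (A : Matrix ι κ ℝ) (i j : ι) :
    cov[fun x ↦ x i, fun x ↦ x j; gaussianMulVec A] = (A * Aᵀ) i j := by
  classical
  have hterm : ∀ i k, MemLp (fun z : κ → ℝ ↦ A i k * z k) 2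
      (Measure.pi fun _ : κ ↦ gaussianReal 0 1) := fun i k ↦
    (memLp_eval_pi_gaussianReal k).const_mul _
  rw [gaussianMulVec, covariance_map_fun (measurable_pi_apply i).aestronglyMeasurable
    (measurable_pi_apply j).aestronglyMeasurable (measurable_mulVec A).aemeasurable]
  simp only [mulVec, dotProduct]
  rw [covariance_fun_sum_fun_sum (hterm i) (hterm j), Matrix.mul_apply]
  refine Finset.sum_congr rfl fun k _ ↦ ?_
  simp only [covariance_const_mul_left, covariance_const_mul_right, covariance_eval_pi_gaussianReal,
    Matrix.one_apply, mul_ite, mul_one, mul_zero, Finset.sum_ite_eq, Finset.mem_univ, if_true]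
  rw [transpose_apply, mul_comm]

variable {Ω : Type*} [MeasurableSpace Ω] {P : Measure Ω} {A : Matrix ι κ ℝ} {T : Ω → ι → ℝ}

lemma integral_eval_of_hasLaw_gaussianMulVec (hT : HasLaw T (gaussianMulVec A) P) (i : ι) :
    ∫ ω, T ω i ∂P = 0 :=
  (hT.integral_comp (measurable_pi_apply i).aestronglyMeasurable).trans
    (integral_eval_gaussianMulVec A i)

lemma covariance_eval_of_hasLaw_gaussianMulVec (hT : HasLaw T (gaussianMulVec A) P) (i j : ι) :
    cov[fun ω ↦ T ω i, fun ω ↦ T ω j; P] = (A * Aᵀ) i j :=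
  (hT.covariance_fun_comp (measurable_pi_apply i).aemeasurable
    (measurable_pi_apply j).aemeasurable).trans (covariance_eval_gaussianMulVec A i j)

end GaussianImage

section Gaussianization

lemma cov_eq_covariance {Ω : Type*} [MeasureSpace Ω] [IsProbabilityMeasure (volume : Measure Ω)]
    {U V : Ω → ℝ} (hU : MemLp U 2 volume) (hV : MemLp V 2 volume) :
    cov U V = cov[U, V; volume] :=
  (covariance_eq_sub hU hV).symm

lemma quantile_le_quantile {q : ℕ → ℝ} {K : ℕ}
    (hq : ∀ m, 0 < m → m < K → stdGaussianCDF (q m) = (m : ℝ) / K) {m : ℕ} (hm : 0 < m)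
    (hmK : m + 1 < K) : q m ≤ q (m + 1) := by
  have hK : (0 : ℝ) < K := by exact_mod_cast (Nat.zero_lt_succ m).trans hmK
  have hlt : cdf (gaussianReal 0 1) (q m) < cdf (gaussianReal 0 1) (q (m + 1)) := by
    rw [cdf_eq_real, cdf_eq_real, measureReal_def, measureReal_def, ← stdGaussianCDF,
      ← stdGaussianCDF, hq m hm (by omega), hq (m + 1) m.succ_pos hmK]
    gcongr
    exact m.lt_succ_self
  exact ((monotone_cdf _).reflect_lt hlt).le

lemma cov_indicator_eq_eventCov {Ω β : Type*} [MeasureSpace Ω] [MeasurableSpace β]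
    {ν : Measure β} [IsProbabilityMeasure ν] {Z : Ω → β} (hZ : HasLaw Z ν volume)
    {s t : Set β} (hs : MeasurableSet s) (ht : MeasurableSet t) :
    cov (s.indicator 1 ∘ Z) (t.indicator 1 ∘ Z) = eventCov ν s t := by
  have hmemLp : ∀ {u : Set β}, MeasurableSet u →
      MemLp (u.indicator (1 : β → ℝ) ∘ Z) 2 volume := fun hu ↦
    MemLp.comp_of_map (by rw [hZ.map_eq]; exact memLp_indicator_one hu) hZ.aemeasurable
  have := hZ.isProbabilityMeasure
  rw [cov_eq_covariance (hmemLp hs) (hmemLp ht), eventCov]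
  exact hZ.covariance_comp (memLp_indicator_one hs).aemeasurable
    (memLp_indicator_one ht).aemeasurable

theorem gaussianized_cov_eq_fk_general
    {Ω : Type*} [MeasureSpace Ω] {ι : Type*} (K : ℕ)
    (q : ℕ → ℝ) (hq : ∀ m : ℕ, 0 < m → m + 1 < K → q m ≤ q (m + 1))
    (S : Matrix ι ι ℝ) (hSdiag : ∀ i, S i i = 1)
    (T : Ω → ι → ℝ) (hTpair : ∀ i j, HasGaussianLaw (fun ω ↦ (T ω i, T ω j)) volume)
    (hTmean : ∀ i, ∫ ω, T ω i = 0)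
    (hTcov : ∀ i j, cov[fun ω ↦ T ω i, fun ω ↦ T ω j; volume] = S i j)
    (D : Ω → ι → Fin K)
    (hD : ∀ ω i (k : Fin K), D ω i = k ↔ T ω i ∈ armSet q K k) (k : Fin K) (i j : ι) :
    cov (fun ω ↦ if D ω i = k then (1 : ℝ) else 0) (fun ω ↦ if D ω j = k then (1 : ℝ) else 0)
      = fkfun q K k (S i j) := by
  have := (hTpair i j).isProbabilityMeasure
  have hTvar : ∀ i, Var[fun ω ↦ T ω i; volume] = 1 := fun i ↦ by
    rw [← covariance_self (hTpair i i).fst.aemeasurable, hTcov, hSdiag]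
  have hS := covariance_mem_Icc (hTpair i j).fst.memLp_two (hTpair i j).snd.memLp_two (hTvar i)
    (hTvar j)
  have hlaw := hasLaw_stdBinormal (hTpair i j) (hTmean i) (hTmean j) (hTvar i) (hTvar j)
  rw [hTcov] at hS hlaw
  have harm := measurableSet_armSet q K k
  have hind : ∀ ω i, (if D ω i = k then (1 : ℝ) else 0) = (armSet q K k).indicator 1 (T ω i) :=
    fun ω i ↦ by by_cases h : T ω i ∈ armSet q K k <;> simp [h, hD]
  simp only [hind]
  rw [← eventCov_stdBinormal_armSet hS hq k]
  exact cov_indicator_eq_eventCov hlaw (measurable_fst harm) (measurable_snd harm)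

end Gaussianization

/-- Let `K ≥ 2`, `Σ` in the correlation elliptope, `T ~ N(0, Σ)` and
`D_i = g(T_i)`. Then for every arm `k` and all `i, j`,
`Cov(1{D_i = k}, 1{D_j = k}) = f_k(Σ_{ij})`, i.e. `Cov_k(D) = f_k(Σ)` entrywise.
The Gaussian law `N(0, Σ)` is expressed as the pushforward of an i.i.d. standard Gaussian
vector by any matrix `A` with `A Aᵀ = Σ`. -/
theorem gaussianized_cov_eq_fk
    {Ω : Type*} [MeasureSpace Ω] [IsProbabilityMeasure (volume : Measure Ω)]
    (n K : ℕ) (hK : 2 ≤ K)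
    (q : ℕ → ℝ) (hq : ∀ m : ℕ, 0 < m → m < K → stdGaussianCDF (q m) = (m : ℝ) / K)
    (S : Matrix (Fin n) (Fin n) ℝ) (hSpsd : S.PosSemidef) (hSdiag : ∀ i, S i i = 1)
    (A : Matrix (Fin n) (Fin n) ℝ) (hA : A * Aᵀ = S)
    (T : Ω → Fin n → ℝ) (hT : Measurable T)
    (hTlaw : Measure.map T volume =
      Measure.map (fun z => A *ᵥ z) (Measure.pi fun _ : Fin n => gaussianReal 0 1))
    (D : Ω → Fin n → Fin K)
    (hD : ∀ ω i (k : Fin K), D ω i = k ↔ T ω i ∈ armSet q K k) :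
    ∀ (k : Fin K) (i j : Fin n),
      cov (fun ω => if D ω i = k then (1 : ℝ) else 0)
          (fun ω => if D ω j = k then (1 : ℝ) else 0) = fkfun q K k (S i j) := by
  have hlaw : HasLaw T (gaussianMulVec A) volume := ⟨hT.aemeasurable, hTlaw⟩
  exact gaussianized_cov_eq_fk_general K q (fun m ↦ quantile_le_quantile hq) S hSdiag T
    (fun i j ↦ hlaw.hasGaussianLaw.prodMk i j) (integral_eval_of_hasLaw_gaussianMulVec hlaw)
    (hA ▸ covariance_eval_of_hasLaw_gaussianMulVec hlaw) D hD

end
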